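/- arXiv:solv-int/9812001 — 2 statements merged into one kernel-verified Lean document; each statement's English description precedes it below -/
import Mathlib

section
/- Lax representation in parabolic coordinates. Let H = p_x² + p_y² and for λ ≠ 0 define the 2×2 matrices L(λ) = [[p_x + y·p_y/(2λ), λ − x − y²/(4λ)], [p_y²/λ, −(p_x + y·p_y/(2λ))]] and A = [[0,1],[0,0]]. Then for every λ ≠ 0 and every matrix entry (i,j), {H, L(λ)_{ij}} = ([A, L(λ)])_{ij}, where [A,L] = A·L − L·A. -/
/-- The canonical Poisson bracket of two functions of `(x, y, pₓ, p_y)` on `ℝ⁴`: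
`{F,G} = ∂F/∂pₓ·∂G/∂x − ∂F/∂x·∂G/∂pₓ + ∂F/∂p_y·∂G/∂y − ∂F/∂y·∂G/∂p_y`. -/
noncomputable def pb (F G : ℝ → ℝ → ℝ → ℝ → ℝ) (x y px py : ℝ) : ℝ :=
    deriv (fun s => F x y s py) px * deriv (fun s => G s y px py) x
  - deriv (fun s => F s y px py) x * deriv (fun s => G x y s py) px
  + deriv (fun s => F x y px s) py * deriv (fun s => G x s px py) y
  - deriv (fun s => F x s px py) y * deriv (fun s => G x y px s) py

/-- The Lax matrix of the free Stäckel system separable in parabolic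
coordinates, with spectral parameter `lam`. -/
noncomputable def L (lam x y px py : ℝ) : Matrix (Fin 2) (Fin 2) ℝ :=
  !![px + y * py / (2 * lam), lam - x - y ^ 2 / (4 * lam);
     py ^ 2 / lam, -(px + y * py / (2 * lam))]

/-- The second Lax matrix. -/
noncomputable def A : Matrix (Fin 2) (Fin 2) ℝ := !![0, 1; 0, 0]

/-- The free Hamiltonian `H = pₓ² + p_y²` in parabolic coordinates. -/
noncomputable def Ham : ℝ → ℝ → ℝ → ℝ → ℝ := fun _ _ px py => px ^ 2 + py ^ 2

/-- Lax representation in parabolic coordinates: the Lax equation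
`{H, L(λ)} = [A, L(λ)]` holds entrywise for every `λ ≠ 0`. -/
theorem lax_parabolic :
    ∀ (lam x y px py : ℝ), lam ≠ 0 → ∀ (i j : Fin 2),
      pb Ham (fun x y px py => L lam x y px py i j) x y px py =
        (A * L lam x y px py - L lam x y px py * A) i j := by
  intro lam x y px py hl i j
  have hH1 : deriv (fun s : ℝ => s ^ 2 + py ^ 2) px = 2 * px := by simp
  have hH2 : deriv (fun s : ℝ => px ^ 2 + s ^ 2) py = 2 * py := by simp
  have h1 : deriv (fun s : ℝ => px + s * py / (2 * lam)) y = py / (2 * lam) := by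
    have h := (((hasDerivAt_id y).mul_const py).div_const (2 * lam)).const_add px
    simpa using h.deriv
  have h1n : deriv (fun s : ℝ => -(px + s * py / (2 * lam))) y = -(py / (2 * lam)) := by
    have h := ((((hasDerivAt_id y).mul_const py).div_const (2 * lam)).const_add px).neg
    simpa using h.deriv
  have h2 : deriv (fun s : ℝ => lam - s - y ^ 2 / (4 * lam)) x = -1 := by
    have h := ((hasDerivAt_id x).const_sub lam).sub_const (y ^ 2 / (4 * lam))
    simpa using h.deriv
  have h3 : deriv (fun s : ℝ => lam - x - s ^ 2 / (4 * lam)) y = -(2 * y / (4 * lam)) := by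
    have h := (((hasDerivAt_id y).pow 2).div_const (4 * lam)).const_sub (lam - x)
    simpa using h.deriv
  fin_cases i <;> fin_cases j <;>
    simp only [pb, Ham, L, A, Matrix.sub_apply, Matrix.mul_apply, Fin.sum_univ_two,
      Fin.zero_eta, Fin.mk_one, Matrix.of_apply, Matrix.cons_val_zero, Matrix.cons_val_one,
      Matrix.cons_val', Matrix.cons_val_fin_one, hH1, hH2, h1, h1n, h2, h3, deriv_const] <;>
    field_simp <;> ring
end

section
/- Spectral curve and commuting integrals in parabolic coordinates. Let L(λ) = [[p_x + y·p_y/(2λ), λ − x − y²/(4λ)], [p_y²/λ, −(p_x + y·p_y/(2λ))]]. Then for every λ ≠ 0, −det L(λ) = H + J/λ, where H = p_x² + p_y² and J = p_y·(y·p_x − x·p_y); moreover {H, J} = 0. -/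
/-- The second integral of motion `J = p_y(y pₓ − x p_y)`. -/
noncomputable def J : ℝ → ℝ → ℝ → ℝ → ℝ :=
  fun x y px py => py * (y * px - x * py)

/-- Spectral curve and commuting integrals in parabolic coordinates:
`−det L(λ) = H + J/λ` for `λ ≠ 0`, and `{H, J} = 0`. -/
theorem spectral_curve_parabolic :
    (∀ lam x y px py : ℝ, lam ≠ 0 →
      -(L lam x y px py).det = Ham x y px py + J x y px py / lam) ∧
    (∀ x y px py : ℝ, pb Ham J x y px py = 0) := by
  constructor
  · intro lam x y px py h
    simp only [L, Ham, J, Matrix.det_fin_two_of]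
    field_simp
    ring
  · intro x y px py
    have h1 : deriv (fun s : ℝ => s ^ 2 + py ^ 2) px = 2 * px := by simp
    have h2 : deriv (fun s : ℝ => px ^ 2 + s ^ 2) py = 2 * py := by simp
    have h3 : deriv (fun s : ℝ => py * (y * px - s * py)) x = -(py * py) := by
      have := (((hasDerivAt_id x).mul_const py).const_sub (y * px)).const_mul py
      simpa using this.deriv
    have h4 : deriv (fun s : ℝ => py * (s * px - x * py)) y = py * px := by
      have := (((hasDerivAt_id y).mul_const px).sub_const (x * py)).const_mul py
      simpa using this.deriv
    simp only [pb, Ham, J, h1, h2, h3, h4, deriv_const]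
    ring
end
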